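/- Let ω = e^{2πi/3} and let S₀ be the span of the five 3 × 4 complex matrices S₁ = [[0,0,0,0],[1,0,0,0],[0,−1,0,0]], S₂ = [[1,0,0,0],[0,ω²,0,0],[0,0,ω,0]], S₃ = [[0,1,0,0],[0,0,1,0],[0,0,0,1]], S₄ = [[0,1,0,0],[0,0,ω,0],[0,0,0,ω²]], S₅ = [[0,0,1,0],[0,0,0,1],[0,0,0,0]]. Then S₀ contains no nonzero matrix of rank at most 1. -/

import Mathlib

open Matrix

lemma minor_zero (M : Matrix (Fin 3) (Fin 4) ℂ) (h : M.rank ≤ 1) (i j : Fin 3) (k l : Fin 4) :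
    M i k * M j l = M i l * M j k := by
  by_contra hne
  have hdet : IsUnit (M.submatrix ![i, j] ![k, l]).det := by
    rw [isUnit_iff_ne_zero, Matrix.det_fin_two]
    simpa [sub_eq_zero] using hne
  have h2 := Matrix.rank_of_isUnit _ ((Matrix.isUnit_iff_isUnit_det _).2 hdet)
  have h3 := Matrix.rank_submatrix_le M ![i, j] ![k, l]
  rw [h2] at h3
  simp at h3
  omega

/-- with `ω = e^{2πi/3}`, the span `S₀` of the five given `3 × 4` complex
matrices contains no nonzero matrix of rank at most 1. -/
theorem stmt7 (ω : ℂ) (hω : ω = Complex.exp (2 * Real.pi * Complex.I / 3)) :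
    ∀ M ∈ Submodule.span ℂ
      ({!![0,0,0,0; 1,0,0,0; 0,-1,0,0],
        !![1,0,0,0; 0,ω^2,0,0; 0,0,ω,0],
        !![0,1,0,0; 0,0,1,0; 0,0,0,1],
        !![0,1,0,0; 0,0,ω,0; 0,0,0,ω^2],
        !![0,0,1,0; 0,0,0,1; 0,0,0,0]} : Set (Matrix (Fin 3) (Fin 4) ℂ)),
      M ≠ 0 → ¬ (M.rank ≤ 1) := by
  intro M hM hne hr
  have hprim : IsPrimitiveRoot ω 3 := by
    rw [hω]; exact_mod_cast Complex.isPrimitiveRoot_exp 3 (by norm_num)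
  have w0 : ω ≠ 0 := hprim.ne_zero (by norm_num)
  have w1 : ω - 1 ≠ 0 := sub_ne_zero.2 (hprim.ne_one (by norm_num))
  have w2 : ω ^ 2 - 1 ≠ 0 :=
    sub_ne_zero.2 (hprim.pow_ne_one_of_pos_of_lt (by norm_num) (by norm_num))
  have hm := minor_zero M hr
  simp only [Submodule.mem_span_insert, Submodule.mem_span_singleton] at hM
  obtain ⟨a, _, ⟨b, _, ⟨c, _, ⟨d, _, ⟨e, rfl⟩, rfl⟩, rfl⟩, rfl⟩, rfl⟩ := hM
  have he := hm 0 1 2 3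
  have ha := hm 1 2 0 1
  have hb := hm 0 1 0 1
  have h1 := hm 0 1 1 2
  have h2 := hm 1 2 2 3
  have h3 := hm 0 2 1 3
  clear hm hr
  simp at he ha
  subst he ha
  simp [w0] at hb
  subst hb
  simp at h1 h2 h3
  have hcd : c = 0 ∧ d = 0 := by
    have key : ∀ x : ℂ, x ≠ 0 → d * x = 0 → d = 0 := fun x hx h => by simpa [hx] using h
    have hd : d = 0 := by
      rcases h1 with h1 | h1
      · rcases h2 with h2 | h2
        · exact key _ w1 (by linear_combination h2 - h1)
        · exact key _ w2 (by linear_combination h2 - h1)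
      · rcases h3 with h3 | h3
        · exact key _ w1 (by linear_combination h1 - h3)
        · exact key _ (mul_ne_zero w0 w1) (by linear_combination h3 - h1)
    subst hd
    simp at h1
    exact ⟨h1, rfl⟩
  obtain ⟨rfl, rfl⟩ := hcd
  simp at hne
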